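/- arXiv:2510.03845 — 2 statements merged into one kernel-verified Lean document; each statement's English description precedes it below -/
import Mathlib

section
/- Let N, T, r, K ∈ ℕ with 1 ≤ K ≤ r, and let R_B ≥ 0. Let J_1,…,J_K be a partition of [T], and let S_1,…,S_K ⊆ [N] be nonempty sets with |S_k| ≤ r. Let ℓ_1,…,ℓ_T ∈ ℝ^N with 0 ≤ ℓ_t(i) ≤ 1 for all t, i. For each k and each t ∈ J_k, let x_t ∈ Δ_N have support contained in S_k, let q_t^s ∈ Δ_N have support contained in S_k for each s ∈ S_k, let n_t ∈ [N], let β_t ∈ Δ_2, and let ε_t ≥ 0. Set w_t = ∑_{s∈S_k} x_t(s)·(q_t^s·ℓ_t). Suppose: (i) for every k and s ∈ S_k, max_{s'∈S_k} ∑_{t∈J_k} x_t(s)·(ℓ_t(s') − q_t^s·ℓ_t) ≤ √(|J_k| · log |S_k|); (ii) for every k and s ∈ S_k there exists j ∈ S_k with ∑_{t∈J_k} x_t(s)·ℓ_t(j) = max_{n∈[N]} ∑_{t∈J_k} x_t(s)·ℓ_t(n); (iii) |β_t(1)·ℓ_t(n_t) + β_t(2)·w_t − x_t·ℓ_t| ≤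 ε_t for all t; and (iv) ∑_{t=1}^T (β_t(1)·ℓ_t(n_t) + β_t(2)·w_t) ≥ ∑_{t=1}^T w_t − R_B. Then for every map σ : [N] → [N], ∑_{t=1}^T ∑_{i=1}^N x_t(i)·ℓ_t(σ(i)) − ∑_{t=1}^T x_t·ℓ_t ≤ √(r³ · T · log r) + R_B + ∑_{t=1}^T ε_t, where log is the natural logarithm. (Swap regret part of the combined simultaneous-regret theorem under a hidden game.) -/
/-! Reduction of swap regret to external regret, one phase at a time: inside a phase, the gain of
a swap map `σ` over the copies' payoff is the sum over the actions `s` of the external regret of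
copy `s` against `σ s`. The best response to copy `s` lies in the candidate set of the phase, so
that regret is at most the bound which copy `s` guarantees against candidates only. The bounds of
the phases add up by Cauchy-Schwarz. The fixed point and master errors are the cost
of passing from the copies' payoff to the payoff of the actual plays. -/

section

open Finset

variable {τ ι κ : Type*}

/-- The external regret against the action `j`, over the rounds in `J`, of the copy of a learner
attached to the action `s`. The plays `x` and payoff vectors `ℓ` are indexed by rounds; in round
`t` the copy is charged the payoffs scaled by `x t s`, and `g t s` is the unscaled payoff of the
mixed action recommended by the copy. -/
def copyRegret (x ℓ g : τ → ι → ℝ) (J : Finset τ) (s j : ι) : ℝ :=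
  ∑ t ∈ J, x t s * (ℓ t j - g t s)

lemma copyRegret_le_copyRegret_iff {x ℓ g : τ → ι → ℝ} {J : Finset τ} {s j j' : ι} :
    copyRegret x ℓ g J s j ≤ copyRegret x ℓ g J s j' ↔
      ∑ t ∈ J, x t s * ℓ t j ≤ ∑ t ∈ J, x t s * ℓ t j' := by
  simp only [copyRegret, mul_sub, sum_sub_distrib, sub_le_sub_iff_right]

lemma copyRegret_le_of_exists_best_response {x ℓ g : τ → ι → ℝ} {J : Finset τ} {S : Finset ι}
    {s : ι} {B : ℝ} (hB : ∀ j ∈ S, copyRegret x ℓ g J s j ≤ B)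
    (hbest : ∃ j ∈ S, ∀ i, ∑ t ∈ J, x t s * ℓ t i ≤ ∑ t ∈ J, x t s * ℓ t j) (i : ι) :
    copyRegret x ℓ g J s i ≤ B := by
  obtain ⟨j, hjS, hj⟩ := hbest
  exact (copyRegret_le_copyRegret_iff.2 (hj i)).trans (hB j hjS)

lemma sum_swap_sub_eq_sum_copyRegret [Fintype ι] {x ℓ g : τ → ι → ℝ} {J : Finset τ}
    {S : Finset ι} (hsupp : ∀ t ∈ J, ∀ i ∉ S, x t i = 0) (σ : ι → ι) :
    ∑ t ∈ J, (∑ i, x t i * ℓ t (σ i) - ∑ s ∈ S, x t s * g t s) =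
      ∑ s ∈ S, copyRegret x ℓ g J s (σ s) := by
  simp only [copyRegret, mul_sub]
  rw [sum_comm]
  refine sum_congr rfl fun t ht ↦ ?_
  have hrestrict : ∑ s ∈ S, x t s * ℓ t (σ s) = ∑ i, x t i * ℓ t (σ i) :=
    sum_subset (subset_univ S) fun i _ hi ↦ by rw [hsupp t ht i hi, zero_mul]
  rw [sum_sub_distrib, hrestrict]

lemma sum_univ_eq_sum_sum_of_pairwise_disjoint {M : Type*} [AddCommMonoid M] [Fintype τ]
    [Fintype κ] {J : κ → Finset τ} (hdisj : Pairwise fun k k' ↦ Disjoint (J k) (J k'))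
    (hcover : ∀ t, ∃ k, t ∈ J k) (f : τ → M) :
    ∑ t, f t = ∑ k, ∑ t ∈ J k, f t := by
  classical
  have hunion : (univ : Finset τ) = univ.biUnion J := by
    ext t
    simpa using hcover t
  rw [hunion, sum_biUnion (hdisj.set_pairwise _)]

lemma sum_sqrt_le_sqrt_card_mul_sum (K : Finset κ) {f : κ → ℝ} (hf : ∀ k, 0 ≤ f k) :
    ∑ k ∈ K, √(f k) ≤ √(#K * ∑ k ∈ K, f k) := by
  have hcs := Real.sum_sqrt_mul_sqrt_le K (fun _ ↦ zero_le_one) hf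
  simpa [Real.sqrt_mul] using hcs

lemma natCast_mul_sqrt_mul_log_le {c r : ℕ} (hcr : c ≤ r) {a : ℝ} (ha : 0 ≤ a) :
    c * √(a * Real.log c) ≤ √(r ^ 2 * Real.log r * a) := by
  obtain rfl | hc := c.eq_zero_or_pos
  · simp
  calc c * √(a * Real.log c) = √(c ^ 2 * Real.log c * a) := by
        rw [mul_assoc, mul_comm (Real.log c), Real.sqrt_mul (sq_nonneg _),
          Real.sqrt_sq c.cast_nonneg]
    _ ≤ √(r ^ 2 * Real.log r * a) := by gcongr

lemma sum_natCast_mul_sqrt_mul_log_le (K : Finset κ) {r : ℕ} {c : κ → ℕ} (hcr : ∀ k, c k ≤ r)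
    {a : κ → ℝ} (ha : ∀ k, 0 ≤ a k) :
    ∑ k ∈ K, c k * √(a k * Real.log (c k)) ≤ √(r ^ 2 * #K * (∑ k ∈ K, a k) * Real.log r) :=
  calc ∑ k ∈ K, c k * √(a k * Real.log (c k))
      ≤ ∑ k ∈ K, √(r ^ 2 * Real.log r * a k) :=
        sum_le_sum fun k _ ↦ natCast_mul_sqrt_mul_log_le (hcr k) (ha k)
    _ ≤ √(#K * ∑ k ∈ K, r ^ 2 * Real.log r * a k) :=
        sum_sqrt_le_sqrt_card_mul_sum K fun k ↦ mul_nonneg (by positivity) (ha k)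
    _ = √(r ^ 2 * #K * (∑ k ∈ K, a k) * Real.log r) := by
        rw [← mul_sum]
        ring_nf

lemma sum_swap_sub_copies_le {r : ℕ} [Fintype τ] [Fintype ι] [Fintype κ] {J : κ → Finset τ}
    (hdisj : Pairwise fun k k' ↦ Disjoint (J k) (J k')) (hcover : ∀ t, ∃ k, t ∈ J k)
    {S : κ → Finset ι} (hScard : ∀ k, #(S k) ≤ r) {x ℓ g : τ → ι → ℝ} {w : τ → ℝ}
    (hxsupp : ∀ k, ∀ t ∈ J k, ∀ i ∉ S k, x t i = 0)
    (hw : ∀ k, ∀ t ∈ J k, w t = ∑ s ∈ S k, x t s * g t s) {σ : ι → ι}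
    (hcopy : ∀ k, ∀ s ∈ S k,
      copyRegret x ℓ g (J k) s (σ s) ≤ √(#(J k) * Real.log #(S k))) :
    ∑ t, ∑ i, x t i * ℓ t (σ i) - ∑ t, w t ≤
      √(r ^ 2 * Fintype.card κ * Fintype.card τ * Real.log r) := by
  have hcard : ∑ k, (#(J k) : ℝ) = Fintype.card τ := by
    simpa using (sum_univ_eq_sum_sum_of_pairwise_disjoint hdisj hcover fun _ ↦ (1 : ℝ)).symm
  calc ∑ t, ∑ i, x t i * ℓ t (σ i) - ∑ t, w t
      = ∑ k, ∑ t ∈ J k, (∑ i, x t i * ℓ t (σ i) - ∑ s ∈ S k, x t s * g t s) := by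
        rw [← sum_sub_distrib, sum_univ_eq_sum_sum_of_pairwise_disjoint hdisj hcover]
        exact sum_congr rfl fun k _ ↦ sum_congr rfl fun t ht ↦ by rw [hw k t ht]
    _ = ∑ k, ∑ s ∈ S k, copyRegret x ℓ g (J k) s (σ s) :=
        sum_congr rfl fun k _ ↦ sum_swap_sub_eq_sum_copyRegret (hxsupp k) σ
    _ ≤ ∑ k, #(S k) * √(#(J k) * Real.log #(S k)) :=
        sum_le_sum fun k _ ↦ by
          simpa only [nsmul_eq_mul] using sum_le_card_nsmul _ _ _ (hcopy k)
    _ ≤ √(r ^ 2 * Fintype.card κ * Fintype.card τ * Real.log r) := by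
        rw [← hcard, ← card_univ]
        exact sum_natCast_mul_sqrt_mul_log_le univ hScard fun k ↦ Nat.cast_nonneg _

/-- `g t s` is the payoff of copy `s`, and `m t` that of the master, in round `t`. -/
theorem stmt_12_general {r : ℕ} [Fintype τ] [Fintype ι] [Fintype κ] {RB : ℝ} {J : κ → Finset τ}
    (hdisj : Pairwise fun k k' ↦ Disjoint (J k) (J k')) (hcover : ∀ t, ∃ k, t ∈ J k)
    {S : κ → Finset ι} (hScard : ∀ k, #(S k) ≤ r) {x ℓ g : τ → ι → ℝ} {ε w m : τ → ℝ}
    (hxsupp : ∀ k, ∀ t ∈ J k, ∀ i ∉ S k, x t i = 0)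
    (hw : ∀ k, ∀ t ∈ J k, w t = ∑ s ∈ S k, x t s * g t s)
    (hcopy : ∀ k, ∀ s ∈ S k, ∀ j ∈ S k,
      copyRegret x ℓ g (J k) s j ≤ √(#(J k) * Real.log #(S k)))
    (hBR : ∀ k, ∀ s ∈ S k, ∃ j ∈ S k,
      ∑ t ∈ J k, x t s * ℓ t j = ⨆ i, ∑ t ∈ J k, x t s * ℓ t i)
    (hfix : ∀ t, m t - ∑ i, x t i * ℓ t i ≤ ε t)
    (hmaster : ∑ t, m t ≥ ∑ t, w t - RB) (σ : ι → ι) :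
    ∑ t, ∑ i, x t i * ℓ t (σ i) - ∑ t, ∑ i, x t i * ℓ t i ≤
      √(r ^ 2 * Fintype.card κ * Fintype.card τ * Real.log r) + RB + ∑ t, ε t := by
  have hbest : ∀ k, ∀ s ∈ S k, ∃ j ∈ S k, ∀ i,
      ∑ t ∈ J k, x t s * ℓ t i ≤ ∑ t ∈ J k, x t s * ℓ t j := fun k s hs ↦
    (hBR k s hs).imp fun j ⟨hjS, hj⟩ ↦
      ⟨hjS, fun i ↦ hj ▸ le_ciSup (f := fun i ↦ ∑ t ∈ J k, x t s * ℓ t i)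
        (Set.finite_range _).bddAbove i⟩
  have hswap := sum_swap_sub_copies_le hdisj hcover hScard hxsupp hw fun k s hs ↦
    copyRegret_le_of_exists_best_response (hcopy k s hs) (hbest k s hs) (σ s)
  have hplay : ∑ t, m t - ∑ t, ∑ i, x t i * ℓ t i ≤ ∑ t, ε t := by
    rw [← sum_sub_distrib]
    exact sum_le_sum fun t _ ↦ hfix t
  linarith

end

/-- Swap regret part of the combined simultaneous-regret theorem under a
hidden game: with phases `J k`, candidate sets `S k` of size at most `r`,
per-copy external regret at most `√(|J k| * log |S k|)`, best responses over
`[N]` attained inside `S k`, `ε t`-approximate fixed points, and a master with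
external regret at most `R_B` against its second expert, the swap regret of
the plays is at most `√(r³ * T * log r) + R_B + ∑ t, ε t`. -/
theorem stmt_12 (N T r K : ℕ) (hK : 1 ≤ K) (hKr : K ≤ r) (RB : ℝ) (hRB : 0 ≤ RB)
    (J : Fin K → Finset (Fin T))
    (hdisj : ∀ k k' : Fin K, k ≠ k' → Disjoint (J k) (J k'))
    (hcover : ∀ t : Fin T, ∃ k, t ∈ J k)
    (S : Fin K → Finset (Fin N))
    (hSne : ∀ k, (S k).Nonempty) (hScard : ∀ k, (S k).card ≤ r)
    (ℓ : Fin T → Fin N → ℝ) (hℓ : ∀ t i, 0 ≤ ℓ t i ∧ ℓ t i ≤ 1)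
    (x : Fin T → Fin N → ℝ) (hx : ∀ t, x t ∈ stdSimplex ℝ (Fin N))
    (hxsupp : ∀ k : Fin K, ∀ t ∈ J k, ∀ i ∉ S k, x t i = 0)
    (q : Fin T → Fin N → Fin N → ℝ) (hq : ∀ t s, q t s ∈ stdSimplex ℝ (Fin N))
    (hqsupp : ∀ k : Fin K, ∀ t ∈ J k, ∀ s ∈ S k, ∀ j ∉ S k, q t s j = 0)
    (n : Fin T → Fin N)
    (β : Fin T → Fin 2 → ℝ) (hβ : ∀ t, β t ∈ stdSimplex ℝ (Fin 2))
    (ε : Fin T → ℝ) (hε : ∀ t, 0 ≤ ε t)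
    (w : Fin T → ℝ)
    (hw : ∀ k : Fin K, ∀ t ∈ J k, w t = ∑ s ∈ S k, x t s * ∑ j, q t s j * ℓ t j)
    (hcopy : ∀ k : Fin K, ∀ s ∈ S k, ∀ s' ∈ S k,
      ∑ t ∈ J k, x t s * (ℓ t s' - ∑ j, q t s j * ℓ t j)
        ≤ Real.sqrt ((J k).card * Real.log ((S k).card)))
    (hBR : ∀ k : Fin K, ∀ s ∈ S k, ∃ j ∈ S k,
      ∑ t ∈ J k, x t s * ℓ t j = ⨆ m : Fin N, ∑ t ∈ J k, x t s * ℓ t m)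
    (hfix : ∀ t, |β t 0 * ℓ t (n t) + β t 1 * w t - ∑ i, x t i * ℓ t i| ≤ ε t)
    (hmaster : ∑ t, (β t 0 * ℓ t (n t) + β t 1 * w t) ≥ (∑ t, w t) - RB) :
    ∀ σ : Fin N → Fin N,
      (∑ t, ∑ i, x t i * ℓ t (σ i)) - ∑ t, ∑ i, x t i * ℓ t i
        ≤ Real.sqrt ((r : ℝ) ^ 3 * T * Real.log r) + RB + ∑ t, ε t := by
  intro σ
  refine (stmt_12_general (fun k k' ↦ hdisj k k') hcover hScard hxsupp hw hcopy hBR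
    (fun t ↦ (le_abs_self _).trans (hfix t)) hmaster σ).trans ?_
  rw [Fintype.card_fin, Fintype.card_fin, pow_succ (r : ℝ) 2]
  gcongr
end

section
/- There exists an absolute constant C > 0 such that the following holds. Let N, T ∈ ℕ with N ≥ 2 and T ≥ 1, let ℓ_1,…,ℓ_T ∈ ℝ^N be an arbitrary fixed (oblivious) sequence with 0 ≤ ℓ_t(i) ≤ 1 for all t, i, and set η = min(1, √((log N)/T)). Let r ∈ ℝ^N be a random vector whose coordinates are independent, each with exponential distribution of density η·e^{−η s} on [0,∞). For each t ∈ [T], let I_t ∈ [N] be the smallest index attaining max_{i∈[N]} (∑_{s=1}^{t−1} ℓ_s(i) + r(i)). Then E[ max_{i∈[N]} ∑_{t=1}^T ℓ_t(i) − ∑_{t=1}^T ℓ_t(I_t) ] ≤ C·√(T·log N). (Follow-the-Perturbed-Leader with exponential perturbations achieves O(√(T log N)) expected external regret using one optimization-oracle call per round.) -/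
open MeasureTheory

/-!
Let `Φ a = E[maxᵢ (aᵢ + rᵢ)]` be the expected maximum of the perturbed payoff `a`. Raising the
payoff from `a` to `a + u` raises `Φ` by at most the expected value of `u` at the leader for
`a + u` (be the leader). Lifting the `i`-th noise coordinate by `1` turns every draw for which `i`
leads at `a + u` into one for which `i` leads at `a`, and, the exponential law being memoryless,
this costs only a factor `exp (-η)` in probability. So the leader for `a` earns at most `η` less
than the leader for `a + u`. Telescoping along the rounds bounds the expected regret by
`Φ 0 + η T`, and a union bound on the tails gives `Φ 0 ≤ (1 + log N) / η`.

Ties between leaders lie in finitely many hyperplanes, a null set, so the expected payoff of any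
leader rule is a sum over the closed regions on which a given action leads.
-/

namespace FollowPerturbedLeader

open ProbabilityTheory

open scoped ENNReal

/-! ### Densities of product measures and translations -/

theorem pi_withDensity_ofReal {ι : Type*} [Fintype ι] {α : ι → Type*}
    [∀ i, MeasurableSpace (α i)] (μ : ∀ i, Measure (α i)) [∀ i, SigmaFinite (μ i)]
    {f : ∀ i, α i → ℝ} (hf : ∀ i, Integrable (f i) (μ i)) (hf₀ : ∀ i x, 0 ≤ f i x) :
    Measure.pi (fun i => (μ i).withDensity fun x => ENNReal.ofReal (f i x)) =
      (Measure.pi μ).withDensity fun x => ∏ i, ENNReal.ofReal (f i (x i)) := by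
  have (i : ι) : IsFiniteMeasure ((μ i).withDensity fun x => ENNReal.ofReal (f i x)) :=
    isFiniteMeasure_withDensity_ofReal (hf i).2
  refine Measure.pi_eq fun s hs => ?_
  calc ((Measure.pi μ).withDensity fun x => ∏ i, ENNReal.ofReal (f i (x i))) (Set.univ.pi s)
      = ∫⁻ x, ENNReal.ofReal (∏ i, f i (x i)) ∂Measure.pi fun i => (μ i).restrict (s i) := by
        rw [withDensity_apply _ (MeasurableSet.univ_pi hs), Measure.restrict_pi_pi]
        simp_rw [ENNReal.ofReal_prod_of_nonneg fun i _ => hf₀ i _]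
    _ = ENNReal.ofReal (∏ i, ∫ x in s i, f i x ∂μ i) := by
        rw [← integral_fintype_prod_eq_prod, ofReal_integral_eq_lintegral_ofReal
          (Integrable.fintype_prod_dep fun i => (hf i).integrableOn)
          (ae_of_all _ fun x => Finset.prod_nonneg fun i _ => hf₀ i _)]
    _ = ∏ i, (μ i).withDensity (fun x => ENNReal.ofReal (f i x)) (s i) := by
        rw [ENNReal.ofReal_prod_of_nonneg fun i _ => integral_nonneg (hf₀ i)]
        refine Finset.prod_congr rfl fun i _ => ?_
        rw [withDensity_apply _ (hs i), ofReal_integral_eq_lintegral_ofReal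
          (hf i).integrableOn (ae_of_all _ (hf₀ i))]

theorem mul_withDensity_preimage_add_right_le {G : Type*} [AddGroup G] [MeasurableSpace G]
    [MeasurableAdd G] {ν : Measure G} [ν.IsAddRightInvariant] {f : G → ℝ≥0∞} (hf : Measurable f)
    {k : ℝ≥0∞} {v : G} (hfv : ∀ x, k * f x ≤ f (x + v)) {s : Set G} (hs : MeasurableSet s) :
    k * ν.withDensity f ((· + v) ⁻¹' s) ≤ ν.withDensity f s := by
  have hs' : MeasurableSet ((· + v) ⁻¹' s) := hs.preimage (measurable_add_const v)
  rw [withDensity_apply _ hs', withDensity_apply _ hs, ← lintegral_const_mul k hf,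
    ← lintegral_indicator hs', ← lintegral_indicator hs,
    ← lintegral_add_right_eq_self (s.indicator f) v]
  refine lintegral_mono fun x => ?_
  by_cases hx : x + v ∈ s <;> simp [Set.indicator, hx, hfv x]

/-! ### The exponential distribution -/

section Exponential

variable {η : ℝ}

theorem measurable_exponentialPDF : Measurable (exponentialPDF η) :=
  (measurable_exponentialPDFReal η).ennreal_ofReal

theorem ofReal_exp_mul_exponentialPDF_le {c : ℝ} (hc : 0 ≤ c) (x : ℝ) :
    ENNReal.ofReal (Real.exp (-(η * c))) * exponentialPDF η x ≤ exponentialPDF η (x + c) := by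
  rcases lt_or_ge x 0 with hx | hx
  · simp [exponentialPDF_of_neg hx]
  · have hexponent : -(η * c) + -(η * x) = -(η * (x + c)) := by ring
    rw [exponentialPDF_of_nonneg hx, exponentialPDF_of_nonneg (add_nonneg hx hc),
      ← ENNReal.ofReal_mul (Real.exp_nonneg _), mul_left_comm, ← Real.exp_add, hexponent]

theorem integrable_exponentialPDFReal (hη : 0 < η) : Integrable (exponentialPDFReal η) := by
  refine ⟨(stronglyMeasurable_exponentialPDFReal η).aestronglyMeasurable, ?_⟩
  rw [hasFiniteIntegral_iff_ofReal (ae_of_all _ (exponentialPDFReal_nonneg hη))]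
  exact (lintegral_exponentialPDF_eq_one hη).trans_lt ENNReal.one_lt_top

theorem ae_nonneg_expMeasure : ∀ᵐ x ∂expMeasure η, 0 ≤ x := by
  refine (ae_withDensity_iff measurable_exponentialPDF).2 (ae_of_all _ fun x hx => ?_)
  contrapose! hx
  exact exponentialPDF_of_neg hx

theorem integral_expMeasure (hη : 0 < η) (f : ℝ → ℝ) :
    ∫ x, f x ∂expMeasure η = ∫ x, exponentialPDFReal η x * f x := by
  refine (integral_withDensity_eq_integral_toReal_smul measurable_exponentialPDF
    (ae_of_all _ fun _ => ENNReal.ofReal_lt_top) f).trans ?_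
  simp only [exponentialPDF, ENNReal.toReal_ofReal (exponentialPDFReal_nonneg hη _), smul_eq_mul]

theorem integral_max_sub_zero_expMeasure (hη : 0 < η) {a : ℝ} (ha : 0 ≤ a) :
    ∫ x, max (x - a) 0 ∂expMeasure η = Real.exp (-(η * a)) / η := by
  rw [integral_expMeasure hη, ← integral_add_right_eq_self _ a]
  have hshift : (fun x => exponentialPDFReal η (x + a) * max (x + a - a) 0) =
      (Set.Ioi 0).indicator fun x =>
        η * Real.exp (-(η * a)) * (x ^ ((2 : ℝ) - 1) * Real.exp (-(η * x))) := by
    funext x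
    rcases le_or_gt x 0 with hx | hx
    · simp [hx]
    · have hxa : 0 ≤ x + a := by positivity
      have hexp : Real.exp (-(η * (x + a))) = Real.exp (-(η * a)) * Real.exp (-(η * x)) := by
        rw [← Real.exp_add]
        ring_nf
      have hpdf : exponentialPDFReal η (x + a) = η * Real.exp (-(η * (x + a))) := by
        simp [exponentialPDFReal, gammaPDFReal, hxa]
      have hpow : x ^ ((2 : ℝ) - 1) = x := by norm_num
      rw [Set.indicator_of_mem (Set.mem_Ioi.2 hx), hpdf, hexp, hpow, add_sub_cancel_right,
        max_eq_left hx.le]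
      ring
  rw [hshift, integral_indicator measurableSet_Ioi, integral_const_mul,
    Real.integral_rpow_mul_exp_neg_mul_Ioi two_pos hη, Real.Gamma_two, Real.rpow_two]
  field_simp

theorem integrable_max_sub_zero_expMeasure (hη : 0 < η) {a : ℝ} (ha : 0 ≤ a) :
    Integrable (fun x => max (x - a) 0) (expMeasure η) :=
  .of_integral_ne_zero <| by rw [integral_max_sub_zero_expMeasure hη ha]; positivity

theorem integrable_id_expMeasure (hη : 0 < η) : Integrable id (expMeasure η) := by
  refine (integrable_max_sub_zero_expMeasure hη le_rfl).congr ?_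
  filter_upwards [ae_nonneg_expMeasure] with x hx
  simp [hx]

end Exponential

/-! ### Leaders of perturbed payoffs -/

section Leader

variable {ι : Type*}

/-- The perturbations `r` under which action `i` attains the maximum of the perturbed payoff
`a + r`, possibly in a tie. -/
def leaderRegion (a : ι → ℝ) (i : ι) : Set (ι → ℝ) := {r | ∀ j, a j + r j ≤ a i + r i}

theorem exists_mem_leaderRegion [Finite ι] [Nonempty ι] (a r : ι → ℝ) :
    ∃ i, r ∈ leaderRegion a i :=
  Finite.exists_max fun i => a i + r i

theorem measurableSet_leaderRegion [Countable ι] (a : ι → ℝ) (i : ι) :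
    MeasurableSet (leaderRegion a i) := by
  simp only [leaderRegion, Set.ofPred_forall]
  exact .iInter fun j => measurableSet_le (by fun_prop) (by fun_prop)

theorem add_single_mem_leaderRegion [DecidableEq ι] {a u r : ι → ℝ} {i : ι} {c : ℝ}
    (hu : ∀ j, 0 ≤ u j) (hui : u i ≤ c) (hr : r ∈ leaderRegion (a + u) i) :
    r + Pi.single i c ∈ leaderRegion a i := by
  intro j
  rcases eq_or_ne j i with rfl | hj
  · exact le_rfl
  · have := hr j
    simp only [Pi.add_apply, Pi.single_eq_same, Pi.single_eq_of_ne hj] at this ⊢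
    linarith [hu j]

variable [Fintype ι] {μ : Measure (ι → ℝ)}

theorem ae_add_ne_add_of_absolutelyContinuous (hμ : μ ≪ volume) (a : ι → ℝ) {i j : ι}
    (hij : i ≠ j) : ∀ᵐ r ∂μ, a i + r i ≠ a j + r j := by
  classical
  let L : (ι → ℝ) →ₗ[ℝ] ℝ := LinearMap.proj (R := ℝ) (φ := fun _ => ℝ) i - LinearMap.proj j
  have hL : Function.Surjective L := fun x => ⟨Pi.single i x, by simp [L, hij.symm]⟩
  have hne : ∀ᵐ r : ι → ℝ, L r ∈ ({a j - a i}ᶜ : Set ℝ) :=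
    (ae_comp_linearMap_mem_iff L volume volume hL (measurableSet_singleton _).compl).2
      (Measure.ae_ne volume _)
  filter_upwards [hμ.ae_le hne] with r hr htie
  exact hr (by simp only [L, LinearMap.sub_apply, LinearMap.proj_apply,
    Set.mem_singleton_iff]; linarith)

variable {a : ι → ℝ} {J : (ι → ℝ) → ι}

theorem comp_leader_ae_eq_sum_indicator (hμ : μ ≪ volume) (hJ : ∀ r, r ∈ leaderRegion a (J r))
    (u : ι → ℝ) :
    (fun r => u (J r)) =ᵐ[μ] fun r => ∑ i, (leaderRegion a i).indicator (fun _ => u i) r := by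
  have hties : ∀ᵐ r ∂μ, ∀ i j, i ≠ j → a i + r i ≠ a j + r j := by
    simp only [ae_all_iff]
    exact fun i j hij => ae_add_ne_add_of_absolutelyContinuous hμ a hij
  filter_upwards [hties] with r hr
  have hunique (i : ι) (hi : i ≠ J r) : r ∉ leaderRegion a i := fun hmem =>
    hr i (J r) hi (le_antisymm (hJ r i) (hmem (J r)))
  rw [Finset.sum_eq_single (J r) (fun i _ hi => Set.indicator_of_notMem (hunique i hi) _)
    (by simp), Set.indicator_of_mem (hJ r)]

variable [IsFiniteMeasure μ]

theorem integrable_comp_leader (hμ : μ ≪ volume) (hJ : ∀ r, r ∈ leaderRegion a (J r))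
    (u : ι → ℝ) : Integrable (fun r => u (J r)) μ :=
  (integrable_finsetSum _ fun i _ =>
    (integrable_const (u i)).indicator (measurableSet_leaderRegion a i)).congr
    (comp_leader_ae_eq_sum_indicator hμ hJ u).symm

theorem integral_comp_leader (hμ : μ ≪ volume) (hJ : ∀ r, r ∈ leaderRegion a (J r))
    (u : ι → ℝ) : ∫ r, u (J r) ∂μ = ∑ i, u i * μ.real (leaderRegion a i) := by
  rw [integral_congr_ae (comp_leader_ae_eq_sum_indicator hμ hJ u), integral_finsetSum _ fun i _ =>
    (integrable_const (u i)).indicator (measurableSet_leaderRegion a i)]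
  refine Finset.sum_congr rfl fun i _ => ?_
  rw [integral_indicator_const _ (measurableSet_leaderRegion a i), smul_eq_mul, mul_comm]

end Leader

/-! ### Be the leader -/

section ExpectedMax

theorem integrable_iSup {ι Ω : Type*} [Finite ι] [Nonempty ι] {_ : MeasurableSpace Ω}
    {μ : Measure Ω} {f : ι → Ω → ℝ} (hf : ∀ i, Integrable (f i) μ) :
    Integrable (fun ω => ⨆ i, f i ω) μ := by
  have := Fintype.ofFinite ι
  refine (integrable_finsetSum Finset.univ fun i _ => (hf i).norm).mono'
    (AEMeasurable.iSup fun i => (hf i).aemeasurable).aestronglyMeasurable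
    (ae_of_all _ fun ω => ?_)
  obtain ⟨i, hi⟩ := exists_eq_ciSup_of_finite (f := fun i => f i ω)
  rw [← hi]
  exact Finset.single_le_sum (f := fun i => ‖f i ω‖) (fun j _ => norm_nonneg _)
    (Finset.mem_univ i)

variable {ι : Type*} {μ : Measure (ι → ℝ)}

/-- The expected maximum of the perturbed payoff `a + r` under the perturbation law `μ`: the
potential along which the regret telescopes. -/
noncomputable def expectedMax (μ : Measure (ι → ℝ)) (a : ι → ℝ) : ℝ := ∫ r, ⨆ i, (a i + r i) ∂μ

theorem expectedMax_add_le [Fintype ι] [Nonempty ι] [IsFiniteMeasure μ] {a u : ι → ℝ}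
    {J : (ι → ℝ) → ι} (hμ : μ ≪ volume) (hint : ∀ i, Integrable (fun r => r i) μ)
    (hJ : ∀ r, r ∈ leaderRegion (a + u) (J r)) :
    expectedMax μ (a + u) ≤ expectedMax μ a + ∫ r, u (J r) ∂μ := by
  have hmax (b : ι → ℝ) : Integrable (fun r => ⨆ i, (b i + r i)) μ :=
    integrable_iSup fun i => (integrable_const (b i)).add (hint i)
  have hu : Integrable (fun r => u (J r)) μ := integrable_comp_leader hμ hJ u
  rw [expectedMax, expectedMax, ← integral_add (hmax a) hu]
  refine integral_mono (hmax (a + u)) ((hmax a).add hu) fun r => ciSup_le fun i => ?_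
  have hlead := hJ r i
  have hsup := Finite.le_ciSup (fun i => a i + r i) (J r)
  simp only [Pi.add_apply] at hlead hsup ⊢
  linarith

theorem iSup_le_expectedMax [Finite ι] [Nonempty ι] [IsProbabilityMeasure μ]
    (hint : ∀ i, Integrable (fun r => r i) μ) (hnonneg : ∀ᵐ r ∂μ, ∀ i, 0 ≤ r i)
    (a : ι → ℝ) : ⨆ i, a i ≤ expectedMax μ a := by
  calc ⨆ i, a i = ∫ _, ⨆ i, a i ∂μ := by simp
    _ ≤ expectedMax μ a := by
      refine integral_mono_ae (integrable_const _)
        (integrable_iSup fun i => (integrable_const (a i)).add (hint i)) ?_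
      filter_upwards [hnonneg] with r hr
      exact ciSup_mono (Set.finite_range _).bddAbove fun i => le_add_of_nonneg_right (hr i)

end ExpectedMax

/-! ### Independent exponential perturbations -/

section ExpNoise

/-- The law of a random vector with independent exponential coordinates of rate `η`. -/
noncomputable abbrev expNoise (ι : Type*) [Fintype ι] (η : ℝ) : Measure (ι → ℝ) :=
  Measure.pi fun _ => expMeasure η

variable {ι : Type*} [Fintype ι] {η : ℝ}

theorem isProbabilityMeasure_expNoise (hη : 0 < η) : IsProbabilityMeasure (expNoise ι η) :=
  have := isProbabilityMeasure_expMeasure hη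
  inferInstance

theorem expNoise_eq_withDensity (hη : 0 < η) :
    expNoise ι η = volume.withDensity fun r => ∏ i, exponentialPDF η (r i) :=
  pi_withDensity_ofReal (fun _ => volume) (fun _ => integrable_exponentialPDFReal hη)
    fun _ => exponentialPDFReal_nonneg hη

theorem withDensity_prod_eq_expNoise (hη : 0 < η) :
    (volume.withDensity fun r : ι → ℝ =>
      ∏ i, ENNReal.ofReal (if 0 ≤ r i then η * Real.exp (-η * r i) else 0)) = expNoise ι η := by
  simp only [expNoise_eq_withDensity hη, exponentialPDF_eq, neg_mul]

theorem expNoise_absolutelyContinuous (hη : 0 < η) : expNoise ι η ≪ volume :=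
  expNoise_eq_withDensity (ι := ι) hη ▸ withDensity_absolutelyContinuous _ _

theorem ae_nonneg_expNoise (hη : 0 < η) : ∀ᵐ r ∂expNoise ι η, ∀ i, 0 ≤ r i := by
  have := isProbabilityMeasure_expMeasure hη
  exact ae_all_iff.2 fun i => (Measure.tendsto_eval_ae_ae (i := i)).eventually ae_nonneg_expMeasure

theorem integrable_eval_expNoise (hη : 0 < η) (i : ι) :
    Integrable (fun r => r i) (expNoise ι η) := by
  have := isProbabilityMeasure_expMeasure hη
  exact integrable_comp_eval (f := id) (integrable_id_expMeasure hη)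

theorem ofReal_exp_mul_expNoise_preimage_add_le (hη : 0 < η) {v : ι → ℝ} (hv : ∀ i, 0 ≤ v i)
    {s : Set (ι → ℝ)} (hs : MeasurableSet s) :
    ENNReal.ofReal (Real.exp (-(η * ∑ i, v i))) * expNoise ι η ((· + v) ⁻¹' s) ≤
      expNoise ι η s := by
  rw [expNoise_eq_withDensity hη]
  have hpdf : Measurable (exponentialPDF η) := measurable_exponentialPDF
  refine mul_withDensity_preimage_add_right_le (by fun_prop) (fun r => ?_) hs
  rw [Finset.mul_sum, ← Finset.sum_neg_distrib, Real.exp_sum,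
    ENNReal.ofReal_prod_of_nonneg fun _ _ => Real.exp_nonneg _, ← Finset.prod_mul_distrib]
  exact Finset.prod_le_prod' fun i _ => ofReal_exp_mul_exponentialPDF_le (hv i) (r i)

theorem exp_mul_expNoise_leaderRegion_add_le (hη : 0 < η) {a u : ι → ℝ} {c : ℝ}
    (hu : ∀ i, 0 ≤ u i) {i : ι} (hui : u i ≤ c) :
    Real.exp (-(η * c)) * (expNoise ι η).real (leaderRegion (a + u) i) ≤
      (expNoise ι η).real (leaderRegion a i) := by
  classical
  have := isProbabilityMeasure_expNoise (ι := ι) hη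
  have hc : 0 ≤ (Pi.single i c : ι → ℝ) := Pi.single_nonneg.2 ((hu i).trans hui)
  have hshift := ofReal_exp_mul_expNoise_preimage_add_le hη hc (measurableSet_leaderRegion a i)
  rw [Fintype.sum_pi_single'] at hshift
  have hsub : leaderRegion (a + u) i ⊆ (· + Pi.single i c) ⁻¹' leaderRegion a i :=
    fun r => add_single_mem_leaderRegion hu hui
  have := ENNReal.toReal_mono (measure_ne_top _ _)
    ((mul_le_mul_right (measure_mono hsub) _).trans hshift)
  simpa [Measure.real, ENNReal.toReal_mul, Real.exp_nonneg] using this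

section Stability

variable {a u : ι → ℝ} {J J' : (ι → ℝ) → ι}

theorem integral_comp_leader_add_le (hη : 0 < η) (hu : ∀ i, 0 ≤ u i ∧ u i ≤ 1)
    (hJ : ∀ r, r ∈ leaderRegion a (J r)) (hJ' : ∀ r, r ∈ leaderRegion (a + u) (J' r)) :
    ∫ r, u (J' r) ∂expNoise ι η ≤ ∫ r, u (J r) ∂expNoise ι η + η := by
  have := isProbabilityMeasure_expNoise (ι := ι) hη
  have hμ := expNoise_absolutelyContinuous (ι := ι) hη
  have hratio : Real.exp (-η) * ∫ r, u (J' r) ∂expNoise ι η ≤ ∫ r, u (J r) ∂expNoise ι η := by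
    rw [integral_comp_leader hμ hJ, integral_comp_leader hμ hJ', Finset.mul_sum]
    refine Finset.sum_le_sum fun i _ => ?_
    rw [mul_left_comm]
    refine mul_le_mul_of_nonneg_left ?_ (hu i).1
    simpa using exp_mul_expNoise_leaderRegion_add_le hη (fun j => (hu j).1) (hu i).2
  have hnonneg : 0 ≤ ∫ r, u (J' r) ∂expNoise ι η := integral_nonneg fun r => (hu _).1
  have hle_one : ∫ r, u (J' r) ∂expNoise ι η ≤ 1 := by
    simpa using integral_mono (integrable_comp_leader hμ hJ' u) (integrable_const 1)
      fun r => (hu (J' r)).2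
  nlinarith [Real.add_one_le_exp (-η)]

theorem expectedMax_expNoise_add_le [Nonempty ι] (hη : 0 < η) (hu : ∀ i, 0 ≤ u i ∧ u i ≤ 1)
    (hJ : ∀ r, r ∈ leaderRegion a (J r)) :
    expectedMax (expNoise ι η) (a + u) ≤
      expectedMax (expNoise ι η) a + (∫ r, u (J r) ∂expNoise ι η + η) := by
  have := isProbabilityMeasure_expNoise (ι := ι) hη
  choose J' hJ' using exists_mem_leaderRegion (a + u)
  calc expectedMax (expNoise ι η) (a + u)
      ≤ expectedMax (expNoise ι η) a + ∫ r, u (J' r) ∂expNoise ι η :=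
        expectedMax_add_le (expNoise_absolutelyContinuous hη) (integrable_eval_expNoise hη) hJ'
    _ ≤ _ := by gcongr; exact integral_comp_leader_add_le hη hu hJ hJ'

end Stability

theorem expectedMax_expNoise_zero_le [Nonempty ι] (hη : 0 < η) :
    expectedMax (expNoise ι η) 0 ≤ (1 + Real.log (Fintype.card ι)) / η := by
  have := isProbabilityMeasure_expMeasure hη
  have hcard : (0 : ℝ) < Fintype.card ι := by exact_mod_cast Fintype.card_pos
  -- The level that a single coordinate exceeds with probability `1 / card ι`.
  set a : ℝ := Real.log (Fintype.card ι) / η with ha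
  have ha₀ : 0 ≤ a := by positivity
  have hexcess (i : ι) : Integrable (fun r => max (r i - a) 0) (expNoise ι η) :=
    integrable_comp_eval (μ := fun _ => expMeasure η) (f := fun x => max (x - a) 0)
      (integrable_max_sub_zero_expMeasure hη ha₀)
  have hexcess_integral (i : ι) :
      ∫ r, max (r i - a) 0 ∂expNoise ι η = Real.exp (-(η * a)) / η := by
    rw [← integral_max_sub_zero_expMeasure hη ha₀]
    exact integral_comp_eval (μ := fun _ => expMeasure η) (f := fun x => max (x - a) 0)
      (integrable_max_sub_zero_expMeasure hη ha₀).aestronglyMeasurable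
  calc expectedMax (expNoise ι η) 0
      ≤ ∫ r, (a + ∑ i, max (r i - a) 0) ∂expNoise ι η := by
        refine integral_mono (integrable_iSup fun i =>
          (integrable_const _).add (integrable_eval_expNoise hη i))
          ((integrable_const a).add (integrable_finsetSum _ fun i _ => hexcess i))
          fun r => ciSup_le fun i => ?_
        have := Finset.single_le_sum (f := fun i => max (r i - a) 0)
          (fun i _ => le_max_right _ _) (Finset.mem_univ i)
        simp only [Pi.zero_apply, zero_add]
        linarith [le_max_left (r i - a) 0]
    _ = a + Fintype.card ι * (Real.exp (-(η * a)) / η) := by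
        rw [integral_add (integrable_const a) (integrable_finsetSum _ fun i _ => hexcess i),
          integral_finsetSum _ fun i _ => hexcess i]
        simp [hexcess_integral]
    _ = (1 + Real.log (Fintype.card ι)) / η := by
        rw [ha, mul_div_cancel₀ _ hη.ne', Real.exp_neg, Real.exp_log hcard]
        field_simp
        ring

end ExpNoise

/-! ### Regret bounds -/

section Regret

variable {ι : Type*} [Fintype ι] {η : ℝ} {T : ℕ} {ℓ : Fin T → ι → ℝ}
  {I : Fin T → (ι → ℝ) → ι}

theorem integral_regret_eq {μ : Measure (ι → ℝ)} [IsProbabilityMeasure μ] (hμ : μ ≪ volume)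
    (hI : ∀ t r, r ∈ leaderRegion (fun i => ∑ s with s < t, ℓ s i) (I t r)) :
    ∫ r, ((⨆ i, ∑ t, ℓ t i) - ∑ t, ℓ t (I t r)) ∂μ =
      (⨆ i, ∑ t, ℓ t i) - ∑ t, ∫ r, ℓ t (I t r) ∂μ := by
  have hint (t : Fin T) : Integrable (fun r => ℓ t (I t r)) μ :=
    integrable_comp_leader hμ (hI t) (ℓ t)
  rw [integral_sub (integrable_const _) (integrable_finsetSum _ fun t _ => hint t),
    integral_finsetSum _ fun t _ => hint t]
  simp

theorem integral_regret_le_rounds [Nonempty ι] {μ : Measure (ι → ℝ)} [IsProbabilityMeasure μ]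
    (hμ : μ ≪ volume) (hℓ : ∀ t i, 0 ≤ ℓ t i ∧ ℓ t i ≤ 1)
    (hI : ∀ t r, r ∈ leaderRegion (fun i => ∑ s with s < t, ℓ s i) (I t r)) :
    ∫ r, ((⨆ i, ∑ t, ℓ t i) - ∑ t, ℓ t (I t r)) ∂μ ≤ T := by
  have hbest : ⨆ i, ∑ t, ℓ t i ≤ T := ciSup_le fun i => by
    simpa using Finset.sum_le_sum fun t (_ : t ∈ Finset.univ) => (hℓ t i).2
  have hearned : 0 ≤ ∑ t, ∫ r, ℓ t (I t r) ∂μ :=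
    Finset.sum_nonneg fun t _ => integral_nonneg fun r => (hℓ t _).1
  rw [integral_regret_eq hμ hI]
  linarith

theorem expectedMax_expNoise_sum_le [Nonempty ι] (hη : 0 < η)
    (hℓ : ∀ t i, 0 ≤ ℓ t i ∧ ℓ t i ≤ 1)
    (hI : ∀ t r, r ∈ leaderRegion (fun i => ∑ s with s < t, ℓ s i) (I t r)) :
    expectedMax (expNoise ι η) (fun i => ∑ t, ℓ t i) ≤
      expectedMax (expNoise ι η) 0 + ∑ t, (∫ r, ℓ t (I t r) ∂expNoise ι η + η) := by
  let L (k : ℕ) (i : ι) : ℝ := ∑ s : Fin T with s.val < k, ℓ s i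
  have hL_succ (t : Fin T) : L (t + 1) = L t + ℓ t := by
    have hfilter : Finset.univ.filter (fun s : Fin T => s.val < t.val + 1) =
        insert t (Finset.univ.filter fun s => s.val < t.val) := by
      ext s
      simp only [Finset.mem_filter_univ, Finset.mem_insert, Fin.ext_iff]
      omega
    funext i
    simp only [L, hfilter, Pi.add_apply]
    rw [Finset.sum_insert (by simp), add_comm]
  have hL_zero : L 0 = 0 := by funext i; simp [L]
  have hL_last : L T = fun i => ∑ t, ℓ t i := by funext i; simp [L]
  have hstep (t : Fin T) : expectedMax (expNoise ι η) (L (t + 1)) - expectedMax (expNoise ι η) (L t)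
      ≤ ∫ r, ℓ t (I t r) ∂expNoise ι η + η := by
    rw [hL_succ, sub_le_iff_le_add']
    exact expectedMax_expNoise_add_le hη (hℓ t) (hI t)
  rw [← hL_last, ← hL_zero, ← sub_le_iff_le_add',
    ← Finset.sum_range_sub (fun k => expectedMax (expNoise ι η) (L k)), Finset.sum_range]
  exact Finset.sum_le_sum fun t _ => hstep t

theorem integral_regret_expNoise_le [Nonempty ι] (hη : 0 < η)
    (hℓ : ∀ t i, 0 ≤ ℓ t i ∧ ℓ t i ≤ 1)
    (hI : ∀ t r, r ∈ leaderRegion (fun i => ∑ s with s < t, ℓ s i) (I t r)) :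
    ∫ r, ((⨆ i, ∑ t, ℓ t i) - ∑ t, ℓ t (I t r)) ∂expNoise ι η ≤
      (1 + Real.log (Fintype.card ι)) / η + η * T := by
  have := isProbabilityMeasure_expNoise (ι := ι) hη
  have hbest : ⨆ i, ∑ t, ℓ t i ≤ expectedMax (expNoise ι η) fun i => ∑ t, ℓ t i :=
    iSup_le_expectedMax (integrable_eval_expNoise hη) (ae_nonneg_expNoise hη) _
  have htelescope := expectedMax_expNoise_sum_le hη hℓ hI
  have hzero := expectedMax_expNoise_zero_le (ι := ι) hη
  rw [integral_regret_eq (expNoise_absolutelyContinuous hη) hI]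
  rw [Finset.sum_add_distrib] at htelescope
  simp only [Finset.sum_const, Finset.card_univ, Fintype.card_fin, nsmul_eq_mul] at htelescope
  linarith

end Regret

/-! ### Tuning the rate -/

theorem min_one_sqrt_div_pos {L T : ℝ} (hL : 0 < L) (hT : 0 < T) : 0 < min 1 √(L / T) :=
  lt_min one_pos (Real.sqrt_pos.2 (div_pos hL hT))

theorem min_regret_bounds_le_four_mul_sqrt {L T η : ℝ} (hL : 1 / 2 ≤ L) (hT : 0 < T)
    (hη : η = min 1 √(L / T)) : min T ((1 + L) / η + η * T) ≤ 4 * √(T * L) := by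
  have hL₀ : 0 < L := by linarith
  rcases le_total 1 √(L / T) with h | h
  · have hTL : T ≤ L := (one_le_div hT).1 (Real.one_le_sqrt.1 h)
    have : T ≤ √(T * L) := Real.le_sqrt_of_sq_le (by nlinarith)
    exact (min_le_left _ _).trans (by linarith)
  · rw [min_eq_right h] at hη
    have hη₀ : 0 < η := hη ▸ Real.sqrt_pos.2 (by positivity)
    have hη_sq : η * η = L / T := by rw [hη, Real.mul_self_sqrt (by positivity)]
    have hηT : η * T = √(T * L) := by
      rw [eq_comm, Real.sqrt_eq_iff_mul_self_eq_of_pos (by positivity), mul_mul_mul_comm, hη_sq]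
      field_simp
    have hLη : L / η = √(T * L) := by
      rw [div_eq_iff hη₀.ne', ← hηT, mul_right_comm, hη_sq]
      field_simp
    have hbias : (1 + L) / η ≤ 3 * (L / η) := by
      rw [← mul_div_assoc]
      gcongr
      linarith
    exact (min_le_right _ _).trans (by linarith)

end FollowPerturbedLeader

open FollowPerturbedLeader

theorem stmt_15_general {ι : Type*} [Fintype ι] [Nontrivial ι] {T : ℕ} (hT : 1 ≤ T)
    {ℓ : Fin T → ι → ℝ} (hℓ : ∀ t i, 0 ≤ ℓ t i ∧ ℓ t i ≤ 1) {η : ℝ}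
    (hη : η = min 1 √(Real.log (Fintype.card ι) / T)) {I : Fin T → (ι → ℝ) → ι}
    (hI : ∀ t r, r ∈ leaderRegion (fun i => ∑ s with s < t, ℓ s i) (I t r)) :
    ∫ r, ((⨆ i, ∑ t, ℓ t i) - ∑ t, ℓ t (I t r)) ∂expNoise ι η ≤
      4 * √(T * Real.log (Fintype.card ι)) := by
  have hT₀ : (0 : ℝ) < T := by exact_mod_cast hT
  have hcard : (2 : ℝ) ≤ Fintype.card ι := by exact_mod_cast Fintype.one_lt_card (α := ι)
  have hlog : 1 / 2 ≤ Real.log (Fintype.card ι) := by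
    linarith [Real.log_two_gt_d9, Real.log_le_log two_pos hcard]
  have hη₀ : 0 < η := hη ▸ min_one_sqrt_div_pos (by linarith) hT₀
  have := isProbabilityMeasure_expNoise (ι := ι) hη₀
  exact (le_min (integral_regret_le_rounds (expNoise_absolutelyContinuous hη₀) hℓ hI)
    (integral_regret_expNoise_le hη₀ hℓ hI)).trans
    (min_regret_bounds_le_four_mul_sqrt hlog hT₀ hη)

/-- Follow-the-Perturbed-Leader with i.i.d. exponential perturbations of rate
`η = min 1 √(log N / T)` achieves `O(√(T log N))` expected external regret
against any oblivious sequence of payoff vectors in `[0,1]^N`: there is an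
absolute constant `C > 0` bounding the expected regret by `C·√(T·log N)`.
Here `I t rv` is the smallest index attaining the maximum of the perturbed
cumulative payoff `∑_{s<t} ℓ s + rv`, and the expectation is taken over the
product measure on `Fin N → ℝ` with density `∏ i, η·exp(−η·rv i)` on the
nonnegative orthant. -/
theorem stmt_15 :
    ∃ C : ℝ, 0 < C ∧
      ∀ (N T : ℕ), 2 ≤ N → 1 ≤ T →
      ∀ ℓ : Fin T → Fin N → ℝ, (∀ t i, 0 ≤ ℓ t i ∧ ℓ t i ≤ 1) →
      ∀ η : ℝ, η = min 1 (Real.sqrt (Real.log N / T)) →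
      ∀ I : Fin T → (Fin N → ℝ) → Fin N,
        (∀ (t : Fin T) (rv : Fin N → ℝ),
          (∀ i : Fin N,
            (∑ s ∈ Finset.univ.filter (fun s => s < t), ℓ s i) + rv i
              ≤ (∑ s ∈ Finset.univ.filter (fun s => s < t), ℓ s (I t rv)) + rv (I t rv)) ∧
          (∀ i : Fin N,
            (∑ s ∈ Finset.univ.filter (fun s => s < t), ℓ s i) + rv i
              = (∑ s ∈ Finset.univ.filter (fun s => s < t), ℓ s (I t rv)) + rv (I t rv) →
            I t rv ≤ i)) →
      ∫ rv, ((⨆ i : Fin N, ∑ t, ℓ t i) - ∑ t, ℓ t (I t rv))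
          ∂(MeasureTheory.volume.withDensity
              (fun rv : Fin N → ℝ =>
                ∏ i, ENNReal.ofReal (if 0 ≤ rv i then η * Real.exp (-η * rv i) else 0)))
        ≤ C * Real.sqrt (T * Real.log N) := by
  refine ⟨4, by norm_num, fun N T hN hT ℓ hℓ η hη I hI => ?_⟩
  have : Nontrivial (Fin N) := Fin.nontrivial_iff_two_le.2 hN
  have hη₀ : 0 < η := hη ▸ min_one_sqrt_div_pos (Real.log_pos (by exact_mod_cast hN))
    (by exact_mod_cast hT)
  rw [withDensity_prod_eq_expNoise hη₀]
  simpa using stmt_15_general hT hℓ (by simpa using hη) fun t r => (hI t r).1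
end
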